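/- Let g_1, ..., g_10 be the ten generators of TA(3) (listed in the context) and let ψ : C[z_1, ..., z_10] → C[M_3 ⊕ M_3] be the C-algebra homomorphism sending z_i to g_i. Then the kernel of ψ is the ideal generated by the single polynomial z_1 z_6 z_7 − z_5 z_10 + z_3 z_4 z_8. In particular TA(3) is isomorphic as a C-algebra to C[z_1, ..., z_10] / ⟨z_1 z_6 z_7 − z_5 z_10 + z_3 z_4 z_8⟩. -/

import Mathlib

open MvPolynomial

/-- The polynomial ring `ℂ[M_n ⊕ M_n]` in the variables `x_{ab}` (indexed by
`Sum.inl (a, b)`) and `y_{ab}` (indexed by `Sum.inr (a, b)`), `1 ≤ a, b ≤ n`. -/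
abbrev MV (n : ℕ) := MvPolynomial ((Fin n × Fin n) ⊕ (Fin n × Fin n)) ℂ

/-- `g` is upper triangular with all diagonal entries equal to `1`. -/
def IsUniUpper {n : ℕ} (g : Matrix (Fin n) (Fin n) ℂ) : Prop :=
  (∀ i, g i i = 1) ∧ ∀ i j : Fin n, j < i → g i j = 0

/-- The action of `(g₁, g₂, g₃) ∈ GL(n)³` on `ℂ[M_n ⊕ M_n]`, given by
`(g·f)(m₁, m₂) = f(g₁ᵀ m₁ g₂, g₁ᵀ m₂ g₃)`: it substitutes for `x_{ab}` the
`(a,b)` entry of `g₁ᵀ X g₂` and for `y_{ab}` the `(a,b)` entry of `g₁ᵀ Y g₃`. -/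
noncomputable def act (n : ℕ) (g1 g2 g3 : Matrix (Fin n) (Fin n) ℂ) : MV n →ₐ[ℂ] MV n :=
  aeval (Sum.elim
    (fun p : Fin n × Fin n => ∑ c : Fin n, ∑ d : Fin n,
      C (g1 c p.1) * C (g2 d p.2) * X (Sum.inl (c, d)))
    (fun p : Fin n × Fin n => ∑ c : Fin n, ∑ d : Fin n,
      C (g1 c p.1) * C (g3 d p.2) * X (Sum.inr (c, d))))

/-- The tensor product algebra `TA(n)`: the subalgebra of `ℂ[M_n ⊕ M_n]` of
polynomials invariant under `U_n × U_n × U_n`. -/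
noncomputable def TA (n : ℕ) : Subalgebra ℂ (MV n) where
  carrier := {f | ∀ g1 g2 g3 : Matrix (Fin n) (Fin n) ℂ,
      IsUniUpper g1 → IsUniUpper g2 → IsUniUpper g3 → act n g1 g2 g3 f = f}
  mul_mem' := by
    intro a b ha hb g1 g2 g3 u1 u2 u3
    rw [map_mul, ha g1 g2 g3 u1 u2 u3, hb g1 g2 g3 u1 u2 u3]
  one_mem' := by
    intro g1 g2 g3 u1 u2 u3
    rw [map_one]
  add_mem' := by
    intro a b ha hb g1 g2 g3 u1 u2 u3
    rw [map_add, ha g1 g2 g3 u1 u2 u3, hb g1 g2 g3 u1 u2 u3]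
  zero_mem' := by
    intro g1 g2 g3 u1 u2 u3
    rw [map_zero]
  algebraMap_mem' := by
    intro r g1 g2 g3 u1 u2 u3
    exact (act n g1 g2 g3).commutes r

/-- The coordinate `x_{ab}` on the first matrix summand (`a b` zero-based). -/
noncomputable def xv (a b : Fin 3) : MV 3 := X (Sum.inl (a, b))

/-- The coordinate `y_{ab}` on the second matrix summand (`a b` zero-based). -/
noncomputable def yv (a b : Fin 3) : MV 3 := X (Sum.inr (a, b))

/-- `g₁ = y₁₁`. -/
noncomputable def g1 : MV 3 := yv 0 0

/-- `g₂ = det (y_{ab})`. -/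
noncomputable def g2 : MV 3 := (Matrix.of fun a b : Fin 3 => yv a b).det

/-- `g₃ = det [[y₁₁, y₁₂], [y₂₁, y₂₂]]`. -/
noncomputable def g3 : MV 3 := yv 0 0 * yv 1 1 - yv 0 1 * yv 1 0

/-- `g₄ = x₁₁`. -/
noncomputable def g4 : MV 3 := xv 0 0

/-- `g₅ = det [[x₁₁, y₁₁], [x₂₁, y₂₁]]`. -/
noncomputable def g5 : MV 3 := xv 0 0 * yv 1 0 - yv 0 0 * xv 1 0

/-- `g₆ = det` of the `3×3` matrix with columns `x_{•1}`, `y_{•1}`, `y_{•2}`. -/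
noncomputable def g6 : MV 3 :=
  (!![xv 0 0, yv 0 0, yv 0 1;
      xv 1 0, yv 1 0, yv 1 1;
      xv 2 0, yv 2 0, yv 2 1]).det

/-- `g₇ = det [[x₁₁, x₁₂], [x₂₁, x₂₂]]`. -/
noncomputable def g7 : MV 3 := xv 0 0 * xv 1 1 - xv 0 1 * xv 1 0

/-- `g₈ = det` of the `3×3` matrix with columns `x_{•1}`, `x_{•2}`, `y_{•1}`. -/
noncomputable def g8 : MV 3 :=
  (!![xv 0 0, xv 0 1, yv 0 0;
      xv 1 0, xv 1 1, yv 1 0;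
      xv 2 0, xv 2 1, yv 2 0]).det

/-- `g₉ = det (x_{ab})`. -/
noncomputable def g9 : MV 3 := (Matrix.of fun a b : Fin 3 => xv a b).det

/-- `D₂ = det` of the `3×3` matrix with columns `x_{•1}`, `x_{•2}`, `y_{•2}`. -/
noncomputable def D2 : MV 3 :=
  (!![xv 0 0, xv 0 1, yv 0 1;
      xv 1 0, xv 1 1, yv 1 1;
      xv 2 0, xv 2 1, yv 2 1]).det

/-- `g₁₀ = D₂ ⬝ y₁₁ - g₈ ⬝ y₁₂`. -/
noncomputable def g10 : MV 3 := D2 * yv 0 0 - g8 * yv 0 1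

/-- The `ℂ`-algebra homomorphism `ψ : ℂ[z₁, ..., z₁₀] → ℂ[M₃ ⊕ M₃]` sending
`z_i` to `g_i`. -/
noncomputable def ψ : MvPolynomial (Fin 10) ℂ →ₐ[ℂ] MV 3 :=
  aeval ![g1, g2, g3, g4, g5, g6, g7, g8, g9, g10]

/-- The point of `M₃ ⊕ M₃` given by a pair of matrices. -/
def pt (A B : Matrix (Fin 3) (Fin 3) ℂ) : (Fin 3 × Fin 3) ⊕ (Fin 3 × Fin 3) → ℂ :=
  Sum.elim (fun p => A p.1 p.2) (fun p => B p.1 p.2)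

lemma pt_surj (v : (Fin 3 × Fin 3) ⊕ (Fin 3 × Fin 3) → ℂ) : ∃ A B, v = pt A B := by
  refine ⟨Matrix.of fun a b => v (Sum.inl (a, b)), Matrix.of fun a b => v (Sum.inr (a, b)), ?_⟩
  funext i
  rcases i with ⟨a, b⟩ | ⟨a, b⟩ <;> simp [pt]

/-- Values of the ten generators at `(A, B)`. -/
def gv (A B : Matrix (Fin 3) (Fin 3) ℂ) : Fin 10 → ℂ :=
  ![B 0 0,
    B.det,
    B 0 0 * B 1 1 - B 0 1 * B 1 0,
    A 0 0,
    A 0 0 * B 1 0 - B 0 0 * A 1 0,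
    (!![A 0 0, B 0 0, B 0 1; A 1 0, B 1 0, B 1 1; A 2 0, B 2 0, B 2 1]).det,
    A 0 0 * A 1 1 - A 0 1 * A 1 0,
    (!![A 0 0, A 0 1, B 0 0; A 1 0, A 1 1, B 1 0; A 2 0, A 2 1, B 2 0]).det,
    A.det,
    (!![A 0 0, A 0 1, B 0 1; A 1 0, A 1 1, B 1 1; A 2 0, A 2 1, B 2 1]).det * B 0 0 -
      (!![A 0 0, A 0 1, B 0 0; A 1 0, A 1 1, B 1 0; A 2 0, A 2 1, B 2 0]).det * B 0 1]

lemma eval_psi (A B : Matrix (Fin 3) (Fin 3) ℂ) (p : MvPolynomial (Fin 10) ℂ) :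
    eval (pt A B) (ψ p) = eval (gv A B) p := by
  have : ((aeval (pt A B) : MV 3 →ₐ[ℂ] ℂ).comp ψ) = aeval (gv A B) := by
    apply MvPolynomial.algHom_ext
    intro i
    fin_cases i <;>
      simp [ψ, gv, g1, g2, g3, g4, g5, g6, g7, g8, g9, g10, D2, xv, yv, pt, Matrix.det_fin_three]
  have h := DFunLike.congr_fun this p
  simpa [aeval_eq_eval] using h

lemma eval_act (A B u v w : Matrix (Fin 3) (Fin 3) ℂ) (f : MV 3) :
    eval (pt A B) (act 3 u v w f) = eval (pt (u.transpose * A * v) (u.transpose * B * w)) f := by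
  have : ((aeval (pt A B) : MV 3 →ₐ[ℂ] ℂ).comp (act 3 u v w)) =
      aeval (pt (u.transpose * A * v) (u.transpose * B * w)) := by
    apply MvPolynomial.algHom_ext
    rintro (⟨a, b⟩ | ⟨a, b⟩) <;>
      simp [act, pt, Matrix.mul_apply, Fin.sum_univ_three] <;> ring
  have h := DFunLike.congr_fun this f
  simpa [aeval_eq_eval] using h

/-- The ten generators are invariant. -/
lemma gv_inv (A B u v w : Matrix (Fin 3) (Fin 3) ℂ) (hu : IsUniUpper u) (hv : IsUniUpper v)
    (hw : IsUniUpper w) : gv (u.transpose * A * v) (u.transpose * B * w) = gv A B := by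
  obtain ⟨hu1, hu2⟩ := hu
  obtain ⟨hv1, hv2⟩ := hv
  obtain ⟨hw1, hw2⟩ := hw
  have a0 := hu2 1 0 (by decide)
  have a1 := hu2 2 0 (by decide)
  have a2 := hu2 2 1 (by decide)
  have b0 := hv2 1 0 (by decide)
  have b1 := hv2 2 0 (by decide)
  have b2 := hv2 2 1 (by decide)
  have c0 := hw2 1 0 (by decide)
  have c1 := hw2 2 0 (by decide)
  have c2 := hw2 2 1 (by decide)
  have du : u.det = 1 := by simp [Matrix.det_fin_three, *]
  have dv : v.det = 1 := by simp [Matrix.det_fin_three, *]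
  have dw : w.det = 1 := by simp [Matrix.det_fin_three, *]
  funext i
  fin_cases i
  on_goal 2 => simp [gv, du, dw]
  on_goal 8 => simp [gv, du, dv]
  all_goals
    simp [gv, Matrix.det_fin_three, Matrix.mul_apply, Fin.sum_univ_three, *] <;> ring

lemma TA_iff_range_le : ψ.range ≤ TA 3 := by
  rintro _ ⟨p, rfl⟩
  intro u v w hu hv hw
  apply MvPolynomial.funext
  intro x
  obtain ⟨A, B, rfl⟩ := pt_surj x
  change eval _ (act 3 u v w (ψ p)) = eval _ (ψ p)
  rw [eval_act, eval_psi, eval_psi, gv_inv A B u v w hu hv hw]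

lemma dvd_of_vanish (G t p : MvPolynomial (Fin 10) ℂ) (hG : Prime G)
    (w0 : Fin 10 → ℂ) (h0 : eval w0 G = 0) (ht0 : eval w0 t ≠ 0)
    (h : ∀ w, eval w G = 0 → eval w t ≠ 0 → eval w p = 0) : G ∣ p := by
  have hP : (Ideal.span {G}).IsPrime := (Ideal.span_singleton_prime hG.ne_zero).2 hG
  have hm : p * t ∈ vanishingIdeal ℂ (zeroLocus ℂ (Ideal.span {G})) := by
    intro w hw
    have hGw : eval w G = 0 := by
      simpa [aeval_eq_eval] using hw G (Ideal.mem_span_singleton_self G)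
    by_cases ht : eval w t = 0
    · simp [aeval_eq_eval, ht]
    · simp [aeval_eq_eval, h w hGw ht]
  rw [MvPolynomial.IsPrime.vanishingIdeal_zeroLocus, Ideal.mem_span_singleton] at hm
  rcases hG.dvd_or_dvd hm with h | ⟨q, rfl⟩
  · exact h
  · simp [h0] at ht0

lemma prime_of (h : MvPolynomial (Fin 10) ℂ) (h9 : 9 ∉ h.vars) (w0 : Fin 10 → ℂ)
    (h4 : w0 4 = 0) (hne : eval w0 h ≠ 0) : Prime (X 4 * X 9 + h) := by
  rw [← irreducible_iff_prime]
  apply irreducible_mul_X_add _ _ _ (X_ne_zero _) (by simp) h9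
  rw [(X_prime (R := ℂ) (i := (4 : Fin 10))).irreducible.isRelPrime_iff_not_dvd]
  rintro ⟨q, rfl⟩
  simp [h4] at hne

lemma vars_aux (a b c d e f : Fin 10) (ha : a ≠ 9) (hb : b ≠ 9) (hc : c ≠ 9)
    (hd : d ≠ 9) (he : e ≠ 9) (hf : f ≠ 9) (r s : ℂ) :
    9 ∉ (C r * (X a * X b * X c) + C s * (X d * X e * X f) : MvPolynomial (Fin 10) ℂ).vars := by
  classical
  intro h
  have h1 : ∀ a b c : Fin 10, ∀ r : ℂ, a ≠ 9 → b ≠ 9 → c ≠ 9 →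
      9 ∉ (C r * (X a * X b * X c) : MvPolynomial (Fin 10) ℂ).vars := by
    intro a b c r ha hb hc h
    have := vars_mul _ _ h
    simp only [vars_C, Finset.empty_union] at this
    have := vars_mul _ _ this
    rcases Finset.mem_union.1 this with this | this
    · have := vars_mul _ _ this
      simp [ha.symm, hb.symm] at this
    · simp [hc.symm] at this
  rcases Finset.mem_union.1 (vars_add_subset _ _ h) with h | h
  · exact h1 _ _ _ _ ha hb hc h
  · exact h1 _ _ _ _ hd he hf h

lemma prime_family (r s : ℂ) (h : r ≠ 0 ∨ s ≠ 0) :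
    Prime (X 4 * X 9 + (C r * (X 0 * X 5 * X 6) + C s * (X 2 * X 3 * X 7)) :
      MvPolynomial (Fin 10) ℂ) := by
  have hv := vars_aux 0 5 6 2 3 7 (by decide) (by decide) (by decide) (by decide) (by decide)
    (by decide) r s
  rcases h with h | h
  · exact prime_of _ hv ![1, 1, 0, 1, 0, 1, 1, 1, 1, 1] (by simp) (by simpa using h)
  · exact prime_of _ hv ![0, 1, 1, 1, 0, 1, 1, 1, 1, 1] (by simp) (by simpa using h)

/-- The family of trinomials `z₅z₁₀ + r z₁z₆z₇ + s z₃z₄z₈`. -/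
noncomputable def Gp (r s : ℂ) : MvPolynomial (Fin 10) ℂ :=
  X 4 * X 9 + (C r * (X 0 * X 5 * X 6) + C s * (X 2 * X 3 * X 7))

lemma eval_Gp (r s : ℂ) (w : Fin 10 → ℂ) :
    eval w (Gp r s) = w 4 * w 9 + (r * (w 0 * w 5 * w 6) + s * (w 2 * w 3 * w 7)) := by
  simp [Gp]

lemma F_eq : (X 0 * X 5 * X 6 - X 4 * X 9 + X 2 * X 3 * X 7 : MvPolynomial (Fin 10) ℂ) =
    - Gp (-1) (-1) := by
  simp [Gp]; ring

lemma psi_Gp : ψ (Gp (-1) (-1)) = 0 := by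
  apply MvPolynomial.funext
  intro x
  obtain ⟨A, B, rfl⟩ := pt_surj x
  rw [eval_psi, eval_Gp]
  simp [gv, Matrix.det_fin_three]
  ring

lemma fun10_ext (f w : Fin 10 → ℂ) (h0 : f 0 = w 0) (h1 : f 1 = w 1) (h2 : f 2 = w 2)
    (h3 : f 3 = w 3) (h4 : f 4 = w 4) (h5 : f 5 = w 5) (h6 : f 6 = w 6) (h7 : f 7 = w 7)
    (h8 : f 8 = w 8) (h9 : f 9 = w 9) : f = w := by
  funext i
  fin_cases i <;> assumption

lemma surj_gen (w : Fin 10 → ℂ) (hG : eval w (Gp (-1) (-1)) = 0)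
    (h0 : w 0 ≠ 0) (h2 : w 2 ≠ 0) (h3 : w 3 ≠ 0) (h6 : w 6 ≠ 0) : ∃ A B, gv A B = w := by
  rw [eval_Gp] at hG
  refine ⟨!![w 3, 0, 0; 0, w 6 / w 3, 0; 0, 0, w 8 / w 6],
    !![w 0, 0, 0; w 4 / w 3, w 2 / w 0, 0; w 7 / w 6, w 9 / (w 6 * w 0), w 1 / w 2], ?_⟩
  apply fun10_ext <;> simp [gv, Matrix.det_fin_three] <;> field_simp
  linear_combination hG

lemma surj_0 (w : Fin 10 → ℂ) (h0 : w 0 = 0) (hG : eval w (Gp 0 (-1)) = 0)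
    (h2 : w 2 ≠ 0) (h3 : w 3 ≠ 0) (h4 : w 4 ≠ 0) (h6 : w 6 ≠ 0) : ∃ A B, gv A B = w := by
  rw [eval_Gp] at hG
  refine ⟨!![w 3, 0, 0; 0, w 6 / w 3, 0; 0, 0, w 8 / w 6],
    !![0, - w 2 * w 3 / w 4, 0; w 4 / w 3, 0, 0; w 7 / w 6, w 5 / w 4, w 1 / w 2], ?_⟩
  apply fun10_ext <;> simp [gv, Matrix.det_fin_three, h0] <;> field_simp
  linear_combination - hG

lemma surj_2 (w : Fin 10 → ℂ) (h2 : w 2 = 0) (hG : eval w (Gp (-1) 0) = 0)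
    (h0 : w 0 ≠ 0) (h3 : w 3 ≠ 0) (h6 : w 6 ≠ 0) (h9 : w 9 ≠ 0) : ∃ A B, gv A B = w := by
  rw [eval_Gp] at hG
  refine ⟨!![w 3, 0, 0; 0, w 6 / w 3, 0; 0, 0, w 8 / w 6],
    !![w 0, 0, 0; w 4 / w 3, 0, - w 1 * w 6 / w 9; w 7 / w 6, w 9 / (w 6 * w 0), 0], ?_⟩
  apply fun10_ext <;> simp [gv, Matrix.det_fin_three, h2] <;> field_simp
  linear_combination hG

lemma surj_3 (w : Fin 10 → ℂ) (h3 : w 3 = 0) (hG : eval w (Gp (-1) 0) = 0)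
    (h0 : w 0 ≠ 0) (h2 : w 2 ≠ 0) (h4 : w 4 ≠ 0) (h6 : w 6 ≠ 0) : ∃ A B, gv A B = w := by
  rw [eval_Gp] at hG
  refine ⟨!![0, w 6 * w 0 / w 4, 0; - w 4 / w 0, 0, 0; w 5 / w 2, - w 7 / w 4, w 8 / w 6],
    !![w 0, 0, 0; 0, w 2 / w 0, 0; 0, 0, w 1 / w 2], ?_⟩
  apply fun10_ext <;> simp [gv, Matrix.det_fin_three, h3] <;> field_simp
  linear_combination - hG

lemma surj_6 (w : Fin 10 → ℂ) (h6 : w 6 = 0) (hG : eval w (Gp 0 (-1)) = 0)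
    (h0 : w 0 ≠ 0) (h2 : w 2 ≠ 0) (h3 : w 3 ≠ 0) (h4 : w 4 ≠ 0) (h7 : w 7 ≠ 0) :
    ∃ A B, gv A B = w := by
  rw [eval_Gp] at hG
  refine ⟨!![w 3, 0, 0; - w 4 / w 0, 0, w 8 * w 4 / (w 3 * w 7); w 5 / w 2, - w 7 / w 4, 0],
    !![w 0, 0, 0; 0, w 2 / w 0, 0; 0, 0, w 1 / w 2], ?_⟩
  apply fun10_ext <;> simp [gv, Matrix.det_fin_three, h6] <;> field_simp
  linear_combination - hG

lemma ker_psi (p : MvPolynomial (Fin 10) ℂ) (hp : ψ p = 0) : Gp (-1) (-1) ∣ p := by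
  apply dvd_of_vanish (Gp (-1) (-1)) (X 0 * X 2 * X 3 * X 6) p
    (prime_family _ _ (by simp)) ![1, 1, 1, 1, 1, 0, 1, 1, 1, 1]
    (by rw [eval_Gp]; simp) (by simp)
  intro w hG ht
  simp only [map_mul, eval_X, ne_eq, mul_eq_zero, not_or] at ht
  obtain ⟨⟨⟨h0, h2⟩, h3⟩, h6⟩ := ht
  obtain ⟨A, B, rfl⟩ := surj_gen w hG h0 h2 h3 h6
  rw [← eval_psi, hp, map_zero]

lemma dvd_sub_subst (i : Fin 10) (p : MvPolynomial (Fin 10) ℂ) :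
    X i ∣ p - aeval (Function.update X i (0 : MvPolynomial (Fin 10) ℂ)) p := by
  have : (Ideal.Quotient.mkₐ ℂ (Ideal.span {(X i : MvPolynomial (Fin 10) ℂ)})).comp
      (aeval (Function.update X i (0 : MvPolynomial (Fin 10) ℂ))) =
      Ideal.Quotient.mkₐ ℂ (Ideal.span {(X i : MvPolynomial (Fin 10) ℂ)}) := by
    apply MvPolynomial.algHom_ext
    intro j
    by_cases h : j = i
    · subst h
      simp only [AlgHom.comp_apply, aeval_X, Function.update_self, map_zero]
      symm
      exact Ideal.Quotient.eq_zero_iff_mem.2 (Ideal.mem_span_singleton_self _)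
    · simp [h]
  have h := DFunLike.congr_fun this p
  rw [← Ideal.mem_span_singleton]
  exact (Ideal.Quotient.mk_eq_mk_iff_sub_mem _ _).1 h.symm

lemma eval_subst (i : Fin 10) (w : Fin 10 → ℂ) (p : MvPolynomial (Fin 10) ℂ) :
    eval w (aeval (Function.update X i (0 : MvPolynomial (Fin 10) ℂ)) p) =
      eval (Function.update w i 0) p := by
  have : (aeval w : MvPolynomial (Fin 10) ℂ →ₐ[ℂ] ℂ).comp
      (aeval (Function.update X i (0 : MvPolynomial (Fin 10) ℂ))) =
      aeval (Function.update w i 0) := by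
    apply MvPolynomial.algHom_ext
    intro j
    by_cases h : j = i
    · subst h; simp
    · simp [h]
  have h := DFunLike.congr_fun this p
  simpa [aeval_eq_eval] using h

lemma descend (i : Fin 10) (r s : ℂ) (hrs : r ≠ 0 ∨ s ≠ 0) (t : MvPolynomial (Fin 10) ℂ)
    (w0 : Fin 10 → ℂ) (h0 : eval w0 (Gp r s) = 0) (ht0 : eval w0 t ≠ 0)
    (hGi : ∀ w, eval (Function.update w i 0) (Gp r s) = eval w (Gp r s))
    (hti : ∀ w, eval (Function.update w i 0) t = eval w t)
    (hF : X i ∣ Gp r s - Gp (-1) (-1)) (hne : gv 1 1 i ≠ 0)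
    (surj : ∀ w, w i = 0 → eval w (Gp r s) = 0 → eval w t ≠ 0 → ∃ A B, gv A B = w)
    (f : MV 3) (hf : ψ (X i) * f ∈ ψ.range) : f ∈ ψ.range := by
  obtain ⟨p, hp⟩ := hf
  change ψ p = ψ (X i) * f at hp
  have hd : Gp r s ∣ aeval (Function.update X i (0 : MvPolynomial (Fin 10) ℂ)) p := by
    apply dvd_of_vanish (Gp r s) t _ (prime_family _ _ hrs) w0 h0 ht0
    intro w hG ht
    rw [eval_subst]
    obtain ⟨A, B, hAB⟩ := surj (Function.update w i 0) (by simp) (by rw [hGi, hG])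
      (by rw [hti]; exact ht)
    rw [← hAB, ← eval_psi, hp, map_mul, eval_psi, hAB]
    simp
  obtain ⟨a, ha⟩ := dvd_sub_subst i p
  obtain ⟨b, hb⟩ := hd
  obtain ⟨c, hc⟩ := hF
  have hpe : p = X i * (a + c * b) + Gp (-1) (-1) * b := by
    linear_combination ha + hb + b * hc
  have hx : ψ (X i) ≠ 0 := by
    intro h
    have h2 := eval_psi 1 1 (X i)
    rw [h, map_zero, eval_X] at h2
    exact hne h2.symm
  refine ⟨a + c * b, ?_⟩
  change ψ (a + c * b) = f
  apply mul_left_cancel₀ hx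
  have h3 : ψ (Gp (-1) (-1) * b) = 0 := by rw [map_mul, psi_Gp, zero_mul]
  rw [← hp, hpe, map_add ψ (X i * _), h3, add_zero, ← map_mul]

lemma descend_0 (f : MV 3) (hf : ψ (X 0) * f ∈ ψ.range) : f ∈ ψ.range := by
  refine descend 0 0 (-1) (by simp) (X 2 * X 3 * X 4 * X 6) 1 (by rw [eval_Gp]; simp) (by simp)
    (fun w => by simp [eval_Gp]) (fun w => by simp)
    ⟨X 5 * X 6, by simp [Gp]; ring⟩ (by simp [gv]) ?_ f hf
  intro w hi hG ht
  simp only [map_mul, eval_X, ne_eq, mul_eq_zero, not_or] at ht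
  obtain ⟨⟨⟨h2, h3⟩, h4⟩, h6⟩ := ht
  exact surj_0 w hi hG h2 h3 h4 h6

lemma descend_2 (f : MV 3) (hf : ψ (X 2) * f ∈ ψ.range) : f ∈ ψ.range := by
  refine descend 2 (-1) 0 (by simp) (X 0 * X 3 * X 6 * X 9) 1 (by rw [eval_Gp]; simp) (by simp)
    (fun w => by simp [eval_Gp]) (fun w => by simp)
    ⟨X 3 * X 7, by simp [Gp]; ring⟩ (by simp [gv]) ?_ f hf
  intro w hi hG ht
  simp only [map_mul, eval_X, ne_eq, mul_eq_zero, not_or] at ht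
  obtain ⟨⟨⟨h0, h3⟩, h6⟩, h9⟩ := ht
  exact surj_2 w hi hG h0 h3 h6 h9

lemma descend_3 (f : MV 3) (hf : ψ (X 3) * f ∈ ψ.range) : f ∈ ψ.range := by
  refine descend 3 (-1) 0 (by simp) (X 0 * X 2 * X 4 * X 6) 1 (by rw [eval_Gp]; simp) (by simp)
    (fun w => by simp [eval_Gp]) (fun w => by simp)
    ⟨X 2 * X 7, by simp [Gp]; ring⟩ (by simp [gv]) ?_ f hf
  intro w hi hG ht
  simp only [map_mul, eval_X, ne_eq, mul_eq_zero, not_or] at ht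
  obtain ⟨⟨⟨h0, h2⟩, h4⟩, h6⟩ := ht
  exact surj_3 w hi hG h0 h2 h4 h6

lemma descend_6 (f : MV 3) (hf : ψ (X 6) * f ∈ ψ.range) : f ∈ ψ.range := by
  refine descend 6 0 (-1) (by simp) (X 0 * X 2 * X 3 * X 4 * X 7) 1 (by rw [eval_Gp]; simp)
    (by simp) (fun w => by simp [eval_Gp]) (fun w => by simp)
    ⟨X 0 * X 5, by simp [Gp]; ring⟩ (by simp [gv]) ?_ f hf
  intro w hi hG ht
  simp only [map_mul, eval_X, ne_eq, mul_eq_zero, not_or] at ht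
  obtain ⟨⟨⟨⟨h0, h2⟩, h3⟩, h4⟩, h7⟩ := ht
  exact surj_6 w hi hG h0 h2 h3 h4 h7

/-- The denominator. -/
noncomputable def den : MvPolynomial (Fin 10) ℂ := X 0 * X 2 * X 3 * X 6

lemma descend_den (N : ℕ) (f : MV 3) (hf : ψ (den ^ N) * f ∈ ψ.range) : f ∈ ψ.range := by
  induction N generalizing f with
  | zero => simpa using hf
  | succ n ih =>
    apply descend_6
    apply descend_3
    apply descend_2
    apply descend_0
    apply ih
    convert hf using 1
    simp only [den, pow_succ, map_mul]
    ring

/-- Functions of `w` which become polynomial after multiplying by a power of `den`. -/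
def Loc (φ : (Fin 10 → ℂ) → ℂ) : Prop :=
  ∃ (N : ℕ) (P : MvPolynomial (Fin 10) ℂ),
    ∀ w, eval w den ≠ 0 → φ w * eval w den ^ N = eval w P

lemma Loc.poly (P : MvPolynomial (Fin 10) ℂ) : Loc (fun w => eval w P) := ⟨0, P, by simp⟩

lemma Loc.const (c : ℂ) : Loc (fun _ => c) := ⟨0, C c, by simp⟩

lemma Loc.coord (i : Fin 10) : Loc (fun w => w i) := ⟨0, X i, by simp⟩

lemma Loc.add {φ χ : (Fin 10 → ℂ) → ℂ} (h1 : Loc φ) (h2 : Loc χ) : Loc (fun w => φ w + χ w) := by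
  obtain ⟨N, P, hP⟩ := h1
  obtain ⟨M, Q, hQ⟩ := h2
  refine ⟨N + M, P * den ^ M + Q * den ^ N, fun w hw => ?_⟩
  simp only [map_add, map_mul, map_pow, ← hP w hw, ← hQ w hw]
  ring

lemma Loc.mul {φ χ : (Fin 10 → ℂ) → ℂ} (h1 : Loc φ) (h2 : Loc χ) : Loc (fun w => φ w * χ w) := by
  obtain ⟨N, P, hP⟩ := h1
  obtain ⟨M, Q, hQ⟩ := h2
  refine ⟨N + M, P * Q, fun w hw => ?_⟩
  simp only [map_mul, ← hP w hw, ← hQ w hw]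
  ring

lemma Loc.inv {i : Fin 10} (h : X i ∣ den) : Loc (fun w => (w i)⁻¹) := by
  obtain ⟨c, hc⟩ := h
  refine ⟨1, c, fun w hw => ?_⟩
  rw [hc, map_mul, eval_X] at hw
  rw [hc, map_mul, eval_X, pow_one]
  have : w i ≠ 0 := left_ne_zero_of_mul hw
  field_simp

lemma Loc.eval {σ : Type*} (e : (Fin 10 → ℂ) → σ → ℂ) (he : ∀ i, Loc (fun w => e w i))
    (f : MvPolynomial σ ℂ) : Loc (fun w => MvPolynomial.eval (e w) f) := by
  induction f using MvPolynomial.induction_on with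
  | C a => simpa using Loc.const a
  | add p q hp hq => simpa using hp.add hq
  | mul_X p i hp => simpa using hp.mul (he i)

/-- Canonical form of the first matrix. -/
noncomputable def secA (w : Fin 10 → ℂ) : Matrix (Fin 3) (Fin 3) ℂ :=
  !![w 3, 0, 0; 0, w 6 * (w 3)⁻¹, 0; 0, 0, w 8 * (w 6)⁻¹]

/-- Canonical form of the second matrix. -/
noncomputable def secB (w : Fin 10 → ℂ) : Matrix (Fin 3) (Fin 3) ℂ :=
  !![w 0, 0, 0; w 4 * (w 3)⁻¹, w 2 * (w 0)⁻¹, 0;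
    w 7 * (w 6)⁻¹, w 9 * ((w 6)⁻¹ * (w 0)⁻¹), w 1 * (w 2)⁻¹]

lemma sec_Loc (i) : Loc (fun w => pt (secA w) (secB w) i) := by
  have i0 : Loc (fun w => (w 0)⁻¹) := Loc.inv ⟨X 2 * X 3 * X 6, by simp only [den]; ring⟩
  have i2 : Loc (fun w => (w 2)⁻¹) := Loc.inv ⟨X 0 * X 3 * X 6, by simp only [den]; ring⟩
  have i3 : Loc (fun w => (w 3)⁻¹) := Loc.inv ⟨X 0 * X 2 * X 6, by simp only [den]; ring⟩
  have i6 : Loc (fun w => (w 6)⁻¹) := Loc.inv ⟨X 0 * X 2 * X 3, by simp only [den]; ring⟩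
  have z := Loc.const 0
  rcases i with ⟨a, b⟩ | ⟨a, b⟩
  · fin_cases a <;> fin_cases b
    exacts [.coord 3, z, z, z, (Loc.coord 6).mul i3, z, z, z, (Loc.coord 8).mul i6]
  · fin_cases a <;> fin_cases b
    exacts [.coord 0, z, z, (Loc.coord 4).mul i3, (Loc.coord 2).mul i0, z,
      (Loc.coord 7).mul i6, (Loc.coord 9).mul (i6.mul i0), (Loc.coord 1).mul i2]

lemma uni_mk (a b c : ℂ) : IsUniUpper !![1, a, b; 0, 1, c; 0, 0, 1] := by
  constructor
  · intro i; fin_cases i <;> rfl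
  · intro i j h; fin_cases i <;> fin_cases j <;> first | rfl | (exact absurd h (by decide))

lemma upper_red (A : Matrix (Fin 3) (Fin 3) ℂ) (h1 : A 0 0 ≠ 0) (h2 : A 1 1 ≠ 0)
    (h10 : A 1 0 = 0) (h20 : A 2 0 = 0) (h21 : A 2 1 = 0) :
    ∃ v, IsUniUpper v ∧ A * v = !![A 0 0, 0, 0; 0, A 1 1, 0; 0, 0, A 2 2] := by
  refine ⟨_, uni_mk (-(A 0 1 / A 0 0))
    (A 0 1 / A 0 0 * (A 1 2 / A 1 1) - A 0 2 / A 0 0) (-(A 1 2 / A 1 1)), ?_⟩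
  ext i j
  fin_cases i <;> fin_cases j <;>
    simp [Matrix.mul_apply, Fin.sum_univ_three, h10, h20, h21] <;> field_simp <;> ring

lemma left_red (A : Matrix (Fin 3) (Fin 3) ℂ) (h1 : A 0 0 ≠ 0)
    (h2 : A 0 0 * A 1 1 - A 0 1 * A 1 0 ≠ 0) :
    ∃ u : Matrix (Fin 3) (Fin 3) ℂ, IsUniUpper u ∧ (u.transpose * A) 0 0 ≠ 0 ∧ (u.transpose * A) 1 1 ≠ 0 ∧
      (u.transpose * A) 1 0 = 0 ∧ (u.transpose * A) 2 0 = 0 ∧ (u.transpose * A) 2 1 = 0 := by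
  obtain ⟨d, hd⟩ : ∃ d, d = A 0 0 * A 1 1 - A 0 1 * A 1 0 := ⟨_, rfl⟩
  rw [← hd] at h2
  refine ⟨_, uni_mk (-(A 1 0 / A 0 0))
    ((A 1 0 * A 2 1 - A 2 0 * A 1 1) / d)
    (-((A 0 0 * A 2 1 - A 2 0 * A 0 1) / d)), ?_, ?_, ?_, ?_, ?_⟩ <;>
    simp [Matrix.mul_apply, Fin.sum_univ_three, Matrix.transpose_apply]
  · exact h1
  · intro h
    apply h2
    rw [hd]
    field_simp at h
    linear_combination h
  · field_simp
    ring
  · field_simp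
    linear_combination A 2 0 * hd
  · field_simp
    linear_combination A 2 1 * hd

lemma right_red (B : Matrix (Fin 3) (Fin 3) ℂ) (h1 : B 0 0 ≠ 0)
    (h2 : B 0 0 * B 1 1 - B 0 1 * B 1 0 ≠ 0) :
    ∃ u : Matrix (Fin 3) (Fin 3) ℂ, IsUniUpper u ∧ (B * u) 0 1 = 0 ∧ (B * u) 0 2 = 0 ∧ (B * u) 1 2 = 0 := by
  obtain ⟨u, hu, -, -, h10, h20, h21⟩ := left_red B.transpose (by simpa using h1)
    (by simp only [Matrix.transpose_apply]; rwa [mul_comm (B 1 0)])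
  refine ⟨u, hu, ?_⟩
  rw [← Matrix.transpose_mul] at h10 h20 h21
  exact ⟨h10, h20, h21⟩

lemma canon (A B : Matrix (Fin 3) (Fin 3) ℂ) (hd : eval (gv A B) den ≠ 0) :
    ∃ u v w, IsUniUpper u ∧ IsUniUpper v ∧ IsUniUpper w ∧
      u.transpose * A * v = secA (gv A B) ∧ u.transpose * B * w = secB (gv A B) := by
  simp only [den, map_mul, eval_X, ne_eq, mul_eq_zero, not_or] at hd
  obtain ⟨⟨⟨h0, h2⟩, h3⟩, h6⟩ := hd
  obtain ⟨u, hu, a1, a2, a3, a4, a5⟩ := left_red A h3 h6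
  obtain ⟨v, hv, hA⟩ := upper_red _ a1 a2 a3 a4 a5
  have hone : IsUniUpper (1 : Matrix (Fin 3) (Fin 3) ℂ) := by
    constructor
    · intro i; simp
    · intro i j h; exact Matrix.one_apply_ne h.ne'
  have hi := gv_inv A B u 1 1 hu hone hone
  rw [mul_one, mul_one] at hi
  have e0 : (u.transpose * B) 0 0 ≠ 0 := by
    have := congrFun hi 0
    rw [← this] at h0
    exact h0
  have e2 := congrFun hi 2
  rw [← e2] at h2
  obtain ⟨w, hw, b1, b2, b3⟩ := right_red _ e0 h2
  refine ⟨u, v, w, hu, hv, hw, ?_⟩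
  rw [e2] at h2
  have key := gv_inv A B u v w hu hv hw
  generalize gv A B = z at *
  generalize u.transpose * B * w = B' at *
  rw [hA] at key ⊢
  generalize (u.transpose * A) 0 0 = a at *
  generalize (u.transpose * A) 1 1 = b at *
  generalize (u.transpose * A) 2 2 = c at *
  subst key
  simp [gv, Matrix.det_fin_three, b1, b2, b3] at h0 h2 h3 h6
  constructor
  · ext i j
    fin_cases i <;> fin_cases j <;>
      simp [secA, gv, Matrix.det_fin_three] <;> field_simp
  · obtain ⟨h2a, h2b⟩ := h2
    ext i j
    fin_cases i <;> fin_cases j <;>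
      simp [secB, gv, Matrix.det_fin_three, b1, b2, b3] <;> field_simp

lemma TA_le_range : TA 3 ≤ ψ.range := by
  intro f hf
  obtain ⟨N, P, hP⟩ := Loc.eval (fun w => pt (secA w) (secB w)) sec_Loc f
  apply descend_den (N + 1)
  refine ⟨P * den, ?_⟩
  change ψ (P * den) = _
  apply MvPolynomial.funext
  intro x
  obtain ⟨A, B, rfl⟩ := pt_surj x
  rw [eval_psi, map_mul, map_mul, eval_psi, map_pow]
  by_cases hd : eval (gv A B) den = 0
  · simp [hd]
  · obtain ⟨u, v, w, hu, hv, hw, hA, hB⟩ := canon A B hd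
    have h1 := eval_act A B u v w f
    rw [hf u v w hu hv hw, hA, hB] at h1
    rw [← hP _ hd, h1]
    simp only
    ring

/-- The kernel of `ψ` is the principal ideal generated by
`z₁z₆z₇ - z₅z₁₀ + z₃z₄z₈` (here `z_i` is `X (i-1)`); in particular `TA(3)` is
isomorphic as a `ℂ`-algebra to `ℂ[z₁, ..., z₁₀] / ⟨z₁z₆z₇ - z₅z₁₀ + z₃z₄z₈⟩`. -/
theorem TA3_presentation :
    RingHom.ker ψ =
      Ideal.span {(X 0 * X 5 * X 6 - X 4 * X 9 + X 2 * X 3 * X 7 :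
        MvPolynomial (Fin 10) ℂ)} ∧
    Nonempty ((MvPolynomial (Fin 10) ℂ ⧸
        Ideal.span {(X 0 * X 5 * X 6 - X 4 * X 9 + X 2 * X 3 * X 7 :
          MvPolynomial (Fin 10) ℂ)}) ≃ₐ[ℂ] TA 3) := by
  have hker : RingHom.ker ψ =
      Ideal.span {(X 0 * X 5 * X 6 - X 4 * X 9 + X 2 * X 3 * X 7 :
        MvPolynomial (Fin 10) ℂ)} := by
    rw [F_eq, Ideal.span_singleton_neg]
    ext p
    rw [RingHom.mem_ker, Ideal.mem_span_singleton]
    constructor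
    · exact ker_psi p
    · rintro ⟨q, rfl⟩
      rw [map_mul, psi_Gp, zero_mul]
  refine ⟨hker, ⟨?_⟩⟩
  rw [← hker]
  exact (Ideal.quotientKerEquivRange ψ).trans
    (Subalgebra.equivOfEq _ _ (le_antisymm TA_iff_range_le TA_le_range))
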